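/- Let v ∉ [n], let X be a set of d-simplices on [n] and Y a set of (d-1)-simplices on [n], and set Ext_v(X,Y) = X ⊕ Cone_v(Y). If X and Y are both acyclic over F_2, then Ext_v(X,Y) is acyclic; and if X and Y are both collapsible, then Ext_v(X,Y) is collapsible. -/

import Mathlib

open Finset symmDiff

/-- The vertex set `[n] = {1, …, n}`. -/
def rng (n : ℕ) : Finset ℕ := Finset.Icc 1 n

/-- The set of `d`-simplices (i.e. `(d+1)`-element subsets) on the vertex set `V`. -/
def simplices (V : Finset ℕ) (d : ℕ) : Finset (Finset ℕ) :=
  V.powerset.filter fun σ => σ.card = d + 1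

/-- The mod-2 boundary of a set `X` of simplices: the set of faces `τ` of codimension one
(`|τ| + 1 = |σ|`) contained in an odd number of members of `X`. -/
def bd (X : Finset (Finset ℕ)) : Finset (Finset ℕ) :=
  (X.biUnion fun σ => σ.powerset).filter
    fun τ => Odd (X.filter fun σ => τ ⊆ σ ∧ τ.card + 1 = σ.card).card

/-- A set of simplices is acyclic (a forest) over `F_2` if no nonempty subset has
empty boundary. -/
def IsAcyclic (F : Finset (Finset ℕ)) : Prop :=
  ∀ Y ⊆ F, Y ≠ ∅ → bd Y ≠ ∅

/-- A `d`-hypertree on `V`: a maximal acyclic set of `d`-simplices on `V`. -/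
def IsHypertreeOn (V : Finset ℕ) (d : ℕ) (T : Finset (Finset ℕ)) : Prop :=
  T ⊆ simplices V d ∧ IsAcyclic T ∧
    ∀ G, T ⊆ G → G ⊆ simplices V d → IsAcyclic G → G = T

/-- A simple cycle over `F_2`: a nonempty set with empty boundary, no nonempty proper
subset of which has empty boundary. -/
def IsSimpleCycle (Z : Finset (Finset ℕ)) : Prop :=
  Z ≠ ∅ ∧ bd Z = ∅ ∧ ∀ Y ⊂ Z, Y ≠ ∅ → bd Y ≠ ∅

/-- Collapsibility: `X` can be reduced to `∅` by repeatedly removing a simplex `σ ∈ X`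
containing a codimension-one face contained in no other current member of `X`. -/
inductive Collapsible : Finset (Finset ℕ) → Prop
  | empty : Collapsible ∅
  | step (X : Finset (Finset ℕ)) (σ τ : Finset ℕ) (hσ : σ ∈ X) (hτ : τ ⊆ σ)
      (hcard : τ.card + 1 = σ.card) (huniq : ∀ σ' ∈ X, τ ⊆ σ' → σ' = σ)
      (h : Collapsible (X.erase σ)) : Collapsible X

/-- The cone over `X` with apex `v`. -/
def cone (v : ℕ) (X : Finset (Finset ℕ)) : Finset (Finset ℕ) :=
  X.image (insert v)

/-- The link of the vertex `v` in `X`. -/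
def link (v : ℕ) (X : Finset (Finset ℕ)) : Finset (Finset ℕ) :=
  (X.filter fun σ => v ∈ σ).image fun σ => σ.erase v

/-- `fill Z T`: the subset `F ⊆ T` with `∂F = Z` (when it exists; it is unique when `T`
is a hypertree and `Z` a cycle). -/
noncomputable def fill (Z T : Finset (Finset ℕ)) : Finset (Finset ℕ) :=
  if h : ∃ F, F ⊆ T ∧ bd F = Z then h.choose else ∅

/-- The average filling-volume `μ(T)` of a `d`-hypertree `T` on `[n]`. -/
noncomputable def fillVolAvg (n d : ℕ) (T : Finset (Finset ℕ)) : ℝ :=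
  (∑ σ ∈ simplices (rng n) d, ((fill (bd {σ}) T).card : ℝ)) / (n.choose (d + 1) : ℝ)

open Classical in
/-- The cut of `τ` in `T`: the set of `d`-simplices `σ` on `[n]` such that
`T ⊕ {τ} ⊕ {σ}` is a `d`-hypertree on `[n]`. -/
noncomputable def cut (n d : ℕ) (τ : Finset ℕ) (T : Finset (Finset ℕ)) : Finset (Finset ℕ) :=
  (simplices (rng n) d).filter fun σ => IsHypertreeOn (rng n) d ((T ∆ {τ}) ∆ {σ})

/-!
Every family `F` of simplices is its deletion at `v` plus the cone over its link at `v`, so it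
suffices to show that `F` is acyclic (collapsible) as soon as its deletion and its link are. Taking
links commutes with `∂`: hence a cycle in `F` has a cycle of the link as its link, which vanishes,
and the cycle lies in the deletion. Likewise an elementary collapse of `σ` through `τ` in the link
is an elementary collapse of `σ ∪ {v}` through `τ ∪ {v}` in `F`, so `F` collapses to its deletion.
-/

/-- The deletion of the vertex `v` from `F`: the simplices of `F` avoiding `v`. Together with the
link it determines `F`, and `Ext_v(X, Y)` is the family with deletion `X` and link `Y`. -/
def deletion (v : ℕ) (F : Finset (Finset ℕ)) : Finset (Finset ℕ) :=
  F.filter (v ∉ ·)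

section LinkDeletion

variable {v : ℕ} {σ τ : Finset ℕ} {F G : Finset (Finset ℕ)}

theorem mem_bd : τ ∈ bd F ↔ Odd #{σ ∈ F | τ ⊆ σ ∧ #τ + 1 = #σ} := by
  rw [bd, mem_filter, and_iff_right_iff_imp]
  intro hodd
  obtain ⟨σ, hσ⟩ := card_pos.mp hodd.pos
  rw [mem_filter] at hσ
  exact mem_biUnion.mpr ⟨σ, hσ.1, mem_powerset.mpr hσ.2.1⟩

theorem mem_cone : σ ∈ cone v F ↔ ∃ τ ∈ F, insert v τ = σ :=
  mem_image

theorem mem_link : τ ∈ link v F ↔ v ∉ τ ∧ insert v τ ∈ F := by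
  simp only [link, mem_image, mem_filter]
  constructor
  · rintro ⟨σ, ⟨hσ, hv⟩, rfl⟩
    exact ⟨notMem_erase v σ, by rwa [insert_erase hv]⟩
  · rintro ⟨hv, hτ⟩
    exact ⟨insert v τ, ⟨hτ, mem_insert_self v τ⟩, erase_insert hv⟩

theorem erase_mem_link (hσ : v ∈ σ) : σ.erase v ∈ link v F ↔ σ ∈ F := by
  rw [mem_link, insert_erase hσ, and_iff_right (notMem_erase v σ)]

theorem mem_deletion : σ ∈ deletion v F ↔ σ ∈ F ∧ v ∉ σ :=
  mem_filter

theorem link_mono (h : F ⊆ G) : link v F ⊆ link v G := fun _ hτ =>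
  mem_link.mpr ⟨(mem_link.mp hτ).1, h (mem_link.mp hτ).2⟩

theorem deletion_mono (h : F ⊆ G) : deletion v F ⊆ deletion v G :=
  filter_subset_filter _ h

theorem link_eq_empty_iff : link v F = ∅ ↔ ∀ σ ∈ F, v ∉ σ := by
  rw [link, image_eq_empty, filter_eq_empty_iff]

theorem deletion_eq_self_iff : deletion v F = F ↔ ∀ σ ∈ F, v ∉ σ :=
  filter_eq_self

theorem deletion_eq_self_of_link_eq_empty (h : link v F = ∅) : deletion v F = F :=
  deletion_eq_self_iff.mpr (link_eq_empty_iff.mp h)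

theorem link_symmDiff : link v (F ∆ G) = link v F ∆ link v G := by
  ext τ
  simp only [mem_link, mem_symmDiff]
  tauto

theorem deletion_symmDiff : deletion v (F ∆ G) = deletion v F ∆ deletion v G := by
  ext σ
  simp only [mem_deletion, mem_symmDiff]
  tauto

theorem link_cone (hF : ∀ σ ∈ F, v ∉ σ) : link v (cone v F) = F := by
  ext τ
  rw [mem_link, mem_cone]
  constructor
  · rintro ⟨hτ, σ, hσ, heq⟩
    rwa [← erase_insert hτ, ← heq, erase_insert (hF σ hσ)]
  · exact fun hτ => ⟨hF τ hτ, τ, hτ, rfl⟩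

theorem deletion_cone : deletion v (cone v F) = ∅ := by
  simp [deletion, cone, filter_image]

theorem link_symmDiff_cone (hF : ∀ σ ∈ F, v ∉ σ) (hG : ∀ σ ∈ G, v ∉ σ) :
    link v (F ∆ cone v G) = G := by
  rw [link_symmDiff, link_eq_empty_iff.mpr hF, link_cone hG, ← bot_eq_empty, bot_symmDiff]

theorem deletion_symmDiff_cone (hF : ∀ σ ∈ F, v ∉ σ) :
    deletion v (F ∆ cone v G) = F := by
  rw [deletion_symmDiff, deletion_eq_self_iff.mpr hF, deletion_cone, ← bot_eq_empty,
    symmDiff_bot]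

theorem link_erase_insert (hσ : v ∉ σ) : link v (F.erase (insert v σ)) = (link v F).erase σ := by
  ext τ
  simp only [mem_link, mem_erase]
  constructor
  · rintro ⟨hτ, hne, hmem⟩
    exact ⟨fun h => hne (h ▸ rfl), hτ, hmem⟩
  · rintro ⟨hne, hτ, hmem⟩
    refine ⟨hτ, fun h => hne ?_, hmem⟩
    rw [← erase_insert hτ, h, erase_insert hσ]

theorem deletion_erase_insert : deletion v (F.erase (insert v σ)) = deletion v F := by
  rw [deletion, filter_erase]
  exact erase_eq_of_notMem fun h => (mem_deletion.mp h).2 (mem_insert_self v σ)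

theorem card_cofaces_link (hτ : v ∉ τ) :
    #{σ ∈ link v F | τ ⊆ σ ∧ #τ + 1 = #σ} =
      #{σ ∈ F | insert v τ ⊆ σ ∧ #(insert v τ) + 1 = #σ} := by
  rw [card_insert_of_notMem hτ]
  refine card_nbij' (insert v) (·.erase v) ?_ ?_ ?_ ?_
  · intro σ hσ
    obtain ⟨hlink, hτσ, hcard⟩ := mem_filter.mp hσ
    obtain ⟨hvσ, hσF⟩ := mem_link.mp hlink
    exact mem_filter.mpr ⟨hσF, insert_subset_insert v hτσ, by rw [card_insert_of_notMem hvσ, hcard]⟩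
  · intro σ hσ
    obtain ⟨hσF, hτσ, hcard⟩ := mem_filter.mp hσ
    obtain ⟨hvσ, hτσ⟩ := insert_subset_iff.mp hτσ
    rw [← card_erase_add_one hvσ] at hcard
    exact mem_filter.mpr ⟨(erase_mem_link hvσ).mpr hσF, subset_erase.mpr ⟨hτσ, hτ⟩,
      Nat.succ_injective hcard⟩
  · intro σ hσ
    exact erase_insert (mem_link.mp (mem_filter.mp hσ).1).1
  · intro σ hσ
    exact insert_erase ((mem_filter.mp hσ).2.1 (mem_insert_self v τ))

theorem bd_link : bd (link v F) = link v (bd F) := by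
  ext τ
  by_cases hτ : v ∈ τ
  · have hcofaces : {σ ∈ link v F | τ ⊆ σ ∧ #τ + 1 = #σ} = ∅ :=
      filter_eq_empty_iff.mpr fun σ hσ h => (mem_link.mp hσ).1 (h.1 hτ)
    simp [mem_bd, mem_link, hcofaces, hτ]
  · rw [mem_link, mem_bd, mem_bd, card_cofaces_link hτ, and_iff_right hτ]

theorem IsAcyclic.of_deletion_link (hdel : IsAcyclic (deletion v F))
    (hlink : IsAcyclic (link v F)) : IsAcyclic F := by
  intro Z hZF hZ hbd
  have hbd_link : bd (link v Z) = ∅ := by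
    rw [bd_link, hbd]
    rfl
  have hlink_empty : link v Z = ∅ := by
    by_contra hne
    exact hlink _ (link_mono hZF) hne hbd_link
  have hZ_sub : Z ⊆ deletion v F := by
    rw [← deletion_eq_self_of_link_eq_empty hlink_empty]
    exact deletion_mono hZF
  exact hdel Z hZ_sub hZ hbd

theorem Collapsible.of_deletion_link (hdel : Collapsible (deletion v F))
    (hlink : Collapsible (link v F)) : Collapsible F := by
  generalize hL : link v F = L at hlink
  induction hlink generalizing F with
  | empty => rwa [deletion_eq_self_of_link_eq_empty hL] at hdel
  | step L σ τ hσL hτσ hcard huniq _ ih =>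
    subst hL
    obtain ⟨hσ, hσF⟩ := mem_link.mp hσL
    have hτ : v ∉ τ := fun h => hσ (hτσ h)
    refine .step F (insert v σ) (insert v τ) hσF (insert_subset_insert v hτσ) ?_ ?_ ?_
    · rw [card_insert_of_notMem hτ, card_insert_of_notMem hσ, hcard]
    · intro σ' hσ'F hsub
      obtain ⟨hvσ', hτσ'⟩ := insert_subset_iff.mp hsub
      have herase : σ'.erase v = σ :=
        huniq _ ((erase_mem_link hvσ').mpr hσ'F) (subset_erase.mpr ⟨hτσ', hτ⟩)
      rw [← herase, insert_erase hvσ']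
    · exact ih (by rwa [deletion_erase_insert]) (link_erase_insert hσ)

end LinkDeletion

theorem notMem_of_subset_simplices {v d : ℕ} {V : Finset ℕ} {F : Finset (Finset ℕ)}
    (hv : v ∉ V) (hF : F ⊆ simplices V d) : ∀ σ ∈ F, v ∉ σ := fun _ hσ hvσ =>
  hv (mem_powerset.mp (mem_filter.mp (hF hσ)).1 hvσ)

theorem conical_extension_acyclic_collapsible_general {v : ℕ} {X Y : Finset (Finset ℕ)}
    (hX : ∀ σ ∈ X, v ∉ σ) (hY : ∀ σ ∈ Y, v ∉ σ) :
    (IsAcyclic X → IsAcyclic Y → IsAcyclic (X ∆ cone v Y)) ∧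
      (Collapsible X → Collapsible Y → Collapsible (X ∆ cone v Y)) := by
  have hdel : deletion v (X ∆ cone v Y) = X := deletion_symmDiff_cone hX
  have hlink : link v (X ∆ cone v Y) = Y := link_symmDiff_cone hX hY
  constructor
  · intro aX aY
    exact .of_deletion_link (hdel.symm ▸ aX) (hlink.symm ▸ aY)
  · intro cX cY
    exact .of_deletion_link (hdel.symm ▸ cX) (hlink.symm ▸ cY)

/-- For `v ∉ [n]`, a set `X` of `d`-simplices and a set `Y` of `(d-1)`-simplices on `[n]`:
if `X` and `Y` are both acyclic over `F_2` then so is `Ext_v(X,Y) = X ⊕ Cone_v(Y)`, and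
if `X` and `Y` are both collapsible then so is `Ext_v(X,Y)`. -/
theorem conical_extension_acyclic_collapsible (n d : ℕ) (hd : 1 ≤ d) (v : ℕ)
    (hv : v ∉ rng n) (X Y : Finset (Finset ℕ))
    (hX : X ⊆ simplices (rng n) d) (hY : Y ⊆ simplices (rng n) (d - 1)) :
    (IsAcyclic X → IsAcyclic Y → IsAcyclic (X ∆ cone v Y)) ∧
      (Collapsible X → Collapsible Y → Collapsible (X ∆ cone v Y)) :=
  conical_extension_acyclic_collapsible_general
    (notMem_of_subset_simplices hv hX) (notMem_of_subset_simplices hv hY)
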